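/- Let N ≥ 1, let n_0,…,n_{N−1} be positive integers, and let σ > 0, T^col > 0 and T_i^succ > 0 (0 ≤ i ≤ N−1) be real constants. Then the function η ↦ log( σ/T^col + Σ_{i=0}^{N−1} n_i (T_i^succ/T^col − 1) e^{η_i} + Π_{i=0}^{N−1} (1 + e^{η_i})^{n_i} − 1 ) is convex on ℝ^N. -/

import Mathlib

/-!
By Hölder's inequality the nonnegative log-convex functions form a subsemiring `S`. Each
`e i = fun η ↦ exp (η i)` lies in `S`, and the only negative coefficients in the normalised slot
duration, the `-n i` of `e i`, are cancelled by the linear part of `∏ i, (1 + e i) ^ n i`. What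
remains is a combination of products of the `e i` with nonnegative coefficients.
-/

lemma sum_rpow_mul_rpow_le_sum_rpow_mul_sum_rpow {ι : Type*} (t : Finset ι) {f g : ι → ℝ}
    {a b : ℝ} (hf : ∀ i ∈ t, 0 ≤ f i) (hg : ∀ i ∈ t, 0 ≤ g i) (ha : 0 < a) (hb : 0 < b)
    (hab : a + b = 1) :
    ∑ i ∈ t, f i ^ a * g i ^ b ≤ (∑ i ∈ t, f i) ^ a * (∑ i ∈ t, g i) ^ b := by
  have holder := Real.inner_le_Lp_mul_Lq_of_nonneg t (Real.HolderConjugate.inv_inv ha hb hab)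
    (fun i hi => Real.rpow_nonneg (hf i hi) a) (fun i hi => Real.rpow_nonneg (hg i hi) b)
  have hf_pow : ∑ i ∈ t, (f i ^ a) ^ a⁻¹ = ∑ i ∈ t, f i :=
    Finset.sum_congr rfl fun i hi => Real.rpow_rpow_inv (hf i hi) ha.ne'
  have hg_pow : ∑ i ∈ t, (g i ^ b) ^ b⁻¹ = ∑ i ∈ t, g i :=
    Finset.sum_congr rfl fun i hi => Real.rpow_rpow_inv (hg i hi) hb.ne'
  simpa only [hf_pow, hg_pow, one_div, inv_inv] using holder

/-- Log-convexity of a nonnegative function on a convex set, written multiplicatively so that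
the value `0`, whose logarithm would be `-∞`, is allowed. -/
structure LogConvexOn {E : Type*} [AddCommMonoid E] [SMul ℝ E] (s : Set E) (f : E → ℝ) :
    Prop where
  convex : Convex ℝ s
  nonneg : ∀ x ∈ s, 0 ≤ f x
  map_add_le : ∀ x ∈ s, ∀ y ∈ s, ∀ a b : ℝ, 0 < a → 0 < b → a + b = 1 →
    f (a • x + b • y) ≤ f x ^ a * f y ^ b

namespace LogConvexOn

variable {E : Type*} [AddCommMonoid E] [SMul ℝ E] {s : Set E} {f g : E → ℝ}

lemma const (hs : Convex ℝ s) {c : ℝ} (hc : 0 ≤ c) : LogConvexOn s (Function.const E c) where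
  convex := hs
  nonneg _ _ := hc
  map_add_le x _ y _ a b ha hb hab := by
    simp only [Function.const_apply]
    rw [← Real.rpow_add_of_nonneg hc ha.le hb.le, hab, Real.rpow_one]

lemma add (hf : LogConvexOn s f) (hg : LogConvexOn s g) : LogConvexOn s (f + g) where
  convex := hf.convex
  nonneg x hx := add_nonneg (hf.nonneg x hx) (hg.nonneg x hx)
  map_add_le x hx y hy a b ha hb hab := by
    have holder : f x ^ a * f y ^ b + g x ^ a * g y ^ b
        ≤ (f x + g x) ^ a * (f y + g y) ^ b := by
      simpa using sum_rpow_mul_rpow_le_sum_rpow_mul_sum_rpow Finset.univ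
        (f := ![f x, g x]) (g := ![f y, g y])
        (by simp [hf.nonneg x hx, hg.nonneg x hx]) (by simp [hf.nonneg y hy, hg.nonneg y hy])
        ha hb hab
    exact (add_le_add (hf.map_add_le x hx y hy a b ha hb hab)
      (hg.map_add_le x hx y hy a b ha hb hab)).trans holder

lemma mul (hf : LogConvexOn s f) (hg : LogConvexOn s g) : LogConvexOn s (f * g) where
  convex := hf.convex
  nonneg x hx := mul_nonneg (hf.nonneg x hx) (hg.nonneg x hx)
  map_add_le x hx y hy a b ha hb hab := by
    have hfx := hf.nonneg x hx
    have hfy := hf.nonneg y hy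
    have hgxy := hg.nonneg _ (hf.convex hx hy ha.le hb.le hab)
    calc f (a • x + b • y) * g (a • x + b • y)
        ≤ (f x ^ a * f y ^ b) * (g x ^ a * g y ^ b) :=
          mul_le_mul (hf.map_add_le x hx y hy a b ha hb hab)
            (hg.map_add_le x hx y hy a b ha hb hab) hgxy (by positivity)
      _ = (f x * g x) ^ a * (f y * g y) ^ b := by
          rw [Real.mul_rpow hfx (hg.nonneg x hx), Real.mul_rpow hfy (hg.nonneg y hy),
            mul_mul_mul_comm]

lemma exp_of_convexOn (hg : ConvexOn ℝ s g) : LogConvexOn s (fun x => Real.exp (g x)) where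
  convex := hg.1
  nonneg x _ := (Real.exp_pos (g x)).le
  map_add_le x hx y hy a b ha hb hab := by
    rw [← Real.exp_mul, ← Real.exp_mul, ← Real.exp_add, Real.exp_le_exp, mul_comm _ a,
      mul_comm _ b]
    exact hg.2 hx hy ha.le hb.le hab

end LogConvexOn

/-- The log-convex functions on a convex set as a subsemiring of all real functions, which gives
access to the closure lemmas for finite sums and products. -/
def logConvexSubsemiring {E : Type*} [AddCommMonoid E] [SMul ℝ E] {s : Set E}
    (hs : Convex ℝ s) : Subsemiring (E → ℝ) where
  carrier := {f | LogConvexOn s f}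
  zero_mem' := .const hs le_rfl
  one_mem' := .const hs zero_le_one
  add_mem' := .add
  mul_mem' := .mul

section Subsemiring

variable {R ι : Type*} [CommRing R] (S : Subsemiring R) (t : Finset ι) {e : ι → R}

lemma prod_one_add_sub_one_sub_sum_mem (he : ∀ i ∈ t, e i ∈ S) :
    ∏ i ∈ t, (1 + e i) - 1 - ∑ i ∈ t, e i ∈ S := by
  induction t using Finset.cons_induction with
  | empty => simp
  | cons j t hj ih =>
    rw [Finset.forall_mem_cons] at he
    obtain ⟨hej, het⟩ := he
    have hprod_sub_one : (∏ i ∈ t, (1 + e i) - 1 - ∑ i ∈ t, e i) + ∑ i ∈ t, e i ∈ S :=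
      add_mem (ih het) (sum_mem het)
    rw [Finset.prod_cons, Finset.sum_cons]
    convert add_mem (ih het) (mul_mem hej hprod_sub_one) using 1
    ring

lemma prod_one_add_pow_sub_one_sub_sum_mem (he : ∀ i ∈ t, e i ∈ S) (n : ι → ℕ) :
    ∏ i ∈ t, (1 + e i) ^ n i - 1 - ∑ i ∈ t, n i * e i ∈ S := by
  have hcopies := prod_one_add_sub_one_sub_sum_mem S (t.sigma fun i => Finset.range (n i))
    (e := fun p => e p.1) fun p hp => he p.1 (Finset.mem_sigma.1 hp).1
  simpa [Finset.prod_sigma, Finset.sum_sigma] using hcopies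

end Subsemiring

section

variable {E ι : Type*} [AddCommMonoid E] [Module ℝ E] {s : Set E}

lemma LogConvexOn.convexOn_log {f : E → ℝ} (hf : LogConvexOn s f) (hpos : ∀ x ∈ s, 0 < f x) :
    ConvexOn ℝ s (fun x => Real.log (f x)) := by
  refine convexOn_iff_forall_pos.2 ⟨hf.convex, fun x hx y hy a b ha hb hab => ?_⟩
  have hfx := hpos x hx
  have hfy := hpos y hy
  calc Real.log (f (a • x + b • y))
      ≤ Real.log (f x ^ a * f y ^ b) :=
        Real.log_le_log (hpos _ (hf.convex hx hy ha.le hb.le hab))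
          (hf.map_add_le x hx y hy a b ha hb hab)
    _ = a • Real.log (f x) + b • Real.log (f y) := by
        rw [Real.log_mul (by positivity) (by positivity), Real.log_rpow hfx, Real.log_rpow hfy,
          smul_eq_mul, smul_eq_mul]

lemma LogConvexOn.sum_mul_add_prod_one_add_pow_sub_one (hs : Convex ℝ s) (t : Finset ι)
    {e : ι → E → ℝ} (he : ∀ i ∈ t, LogConvexOn s (e i)) {n : ι → ℕ} {w : ι → ℝ}
    (hw : ∀ i ∈ t, 0 ≤ n i + w i) :
    LogConvexOn s fun x => ∑ i ∈ t, w i * e i x + ∏ i ∈ t, (1 + e i x) ^ n i - 1 := by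
  have hlinear : ∑ i ∈ t, Function.const E (n i + w i) * e i ∈ logConvexSubsemiring hs :=
    sum_mem fun i hi => mul_mem (LogConvexOn.const hs (hw i hi)) (he i hi)
  have hhigher := prod_one_add_pow_sub_one_sub_sum_mem (logConvexSubsemiring hs) t he n
  convert LogConvexOn.add hlinear hhigher using 1
  ext x
  simp only [Pi.add_apply, Pi.sub_apply, Finset.sum_apply, Finset.prod_apply, Pi.mul_apply,
    Pi.pow_apply, Pi.one_apply, Pi.natCast_apply, Function.const_apply, add_mul,
    Finset.sum_add_distrib]
  ring

theorem logX_convex_general (hs : Convex ℝ s) (t : Finset ι) {e : ι → E → ℝ}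
    (he : ∀ i ∈ t, LogConvexOn s (e i)) {n : ι → ℕ} {w : ι → ℝ}
    (hw : ∀ i ∈ t, 0 ≤ n i + w i) {c : ℝ} (hc : 0 < c) :
    ConvexOn ℝ s fun x =>
      Real.log (c + ∑ i ∈ t, w i * e i x + ∏ i ∈ t, (1 + e i x) ^ n i - 1) := by
  have hX := LogConvexOn.sum_mul_add_prod_one_add_pow_sub_one hs t he hw
  have hlog := ((LogConvexOn.const hs hc.le).add hX).convexOn_log fun x hx =>
    add_pos_of_pos_of_nonneg hc (hX.nonneg x hx)
  simpa only [Pi.add_apply, Function.const_apply, add_sub_assoc, add_assoc] using hlog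

end

/-- Let `N ≥ 1`, `n_0, …, n_{N-1}` positive integers, and `σ > 0`,
`T^col > 0`, `T_i^succ > 0` real constants. Then
`η ↦ log( σ/T^col + Σ_i n_i (T_i^succ/T^col − 1) e^{η_i} + Π_i (1 + e^{η_i})^{n_i} − 1 )`
is convex on `ℝ^N`. -/
theorem logX_convex (N : ℕ) (hN : 1 ≤ N) (n : Fin N → ℕ) (hn : ∀ i, 0 < n i)
    (σ Tcol : ℝ) (Ts : Fin N → ℝ) (hσ : 0 < σ) (hTcol : 0 < Tcol) (hTs : ∀ i, 0 < Ts i) :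
    ConvexOn ℝ Set.univ (fun η : Fin N → ℝ =>
      Real.log (σ / Tcol + ∑ i, (n i : ℝ) * (Ts i / Tcol - 1) * Real.exp (η i)
        + ∏ i, (1 + Real.exp (η i)) ^ (n i) - 1)) := by
  refine logX_convex_general convex_univ Finset.univ
    (fun i _ => .exp_of_convexOn ((LinearMap.proj (R := ℝ) i).convexOn convex_univ))
    (fun i _ => ?_) (div_pos hσ hTcol)
  calc (0 : ℝ) ≤ n i * (Ts i / Tcol) := mul_nonneg (n i).cast_nonneg (div_pos (hTs i) hTcol).le
    _ = n i + n i * (Ts i / Tcol - 1) := by ring
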